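/- arXiv:1408.6974 — 4 statements merged into one kernel-verified Lean document; each statement's English description precedes it below -/
import Mathlib

section
/- Let Ω, Ω' ⊆ ℂ be open sets and f : Ω → Ω' a bijection such that f is real-differentiable on Ω, f⁻¹ is real-differentiable on Ω', and for every z ∈ Ω one has f_z(z) ≠ 0 and |μ_f(z)| < 1. Let g : Ω' → ℂ be real-differentiable on Ω' with g_z(w) ≠ 0 for all w ∈ Ω'. If the Beltrami coefficients of f⁻¹ and g agree, i.e., μ_{f⁻¹}(w) = μ_g(w) for all w ∈ Ω', then the Beltrami coefficient of the composition vanishes: for every z ∈ Ω, (g∘f)_zbar(z) = 0, so g∘f is conformal (satisfies the Cauchy–Riemann equations) at every point of Ω. -/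
/-- The Wirtinger derivative f_z(z) = (f_x(z) - i·f_y(z))/2, where f_x, f_y are the
real Fréchet derivative of f at z applied to 1 and to i respectively. -/
noncomputable def wirtZ (f : ℂ → ℂ) (z : ℂ) : ℂ :=
  (fderiv ℝ f z 1 - Complex.I * fderiv ℝ f z Complex.I) / 2

/-- The Wirtinger derivative f_zbar(z) = (f_x(z) + i·f_y(z))/2. -/
noncomputable def wirtZBar (f : ℂ → ℂ) (z : ℂ) : ℂ :=
  (fderiv ℝ f z 1 + Complex.I * fderiv ℝ f z Complex.I) / 2

/-- The Beltrami coefficient μ_f(z) = f_zbar(z) / f_z(z). -/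
noncomputable def beltrami (f : ℂ → ℂ) (z : ℂ) : ℂ := wirtZBar f z / wirtZ f z

theorem fderiv_eq_wirt (f : ℂ → ℂ) (z v : ℂ) :
    fderiv ℝ f z v = wirtZ f z * v + wirtZBar f z * (starRingEnd ℂ) v := by
  have h : v = v.re • (1 : ℂ) + v.im • Complex.I := by
    apply Complex.ext <;> simp
  have h1 : fderiv ℝ f z v = v.re * fderiv ℝ f z 1 + v.im * fderiv ℝ f z Complex.I := by
    conv_lhs => rw [h]
    rw [map_add, map_smul, map_smul, Complex.real_smul, Complex.real_smul]
  have h2 : v = v.re + v.im * Complex.I := (Complex.re_add_im v).symm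
  have h3 : (starRingEnd ℂ) v = v.re - v.im * Complex.I := by
    apply Complex.ext <;> simp
  rw [h1, h3]
  conv_rhs => rw [h2]
  unfold wirtZ wirtZBar
  simp only [Complex.add_re, Complex.add_im, Complex.ofReal_re, Complex.ofReal_im,
    Complex.mul_re, Complex.mul_im, Complex.I_re, Complex.I_im]
  ring_nf
  simp only [Complex.I_sq]
  ring_nf

theorem wirtZBar_comp (g f : ℂ → ℂ) (z : ℂ) (hg : DifferentiableAt ℝ g (f z))
    (hf : DifferentiableAt ℝ f z) :
    wirtZBar (g ∘ f) z = wirtZ g (f z) * wirtZBar f z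
      + wirtZBar g (f z) * (starRingEnd ℂ) (wirtZ f z) := by
  have h : ∀ v, fderiv ℝ (g ∘ f) z v = wirtZ g (f z) * fderiv ℝ f z v
      + wirtZBar g (f z) * (starRingEnd ℂ) (fderiv ℝ f z v) := by
    intro v
    rw [fderiv_comp z hg hf, ContinuousLinearMap.comp_apply, fderiv_eq_wirt g]
  have e : wirtZBar (g ∘ f) z = (fderiv ℝ (g ∘ f) z 1
      + Complex.I * fderiv ℝ (g ∘ f) z Complex.I) / 2 := rfl
  rw [e, h, h]
  unfold wirtZ wirtZBar
  simp only [map_div₀, map_sub, map_mul, Complex.conj_I, map_ofNat]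
  ring

theorem wirtZ_comp (g f : ℂ → ℂ) (z : ℂ) (hg : DifferentiableAt ℝ g (f z))
    (hf : DifferentiableAt ℝ f z) :
    wirtZ (g ∘ f) z = wirtZ g (f z) * wirtZ f z
      + wirtZBar g (f z) * (starRingEnd ℂ) (wirtZBar f z) := by
  have h : ∀ v, fderiv ℝ (g ∘ f) z v = wirtZ g (f z) * fderiv ℝ f z v
      + wirtZBar g (f z) * (starRingEnd ℂ) (fderiv ℝ f z v) := by
    intro v
    rw [fderiv_comp z hg hf, ContinuousLinearMap.comp_apply, fderiv_eq_wirt g]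
  have e : wirtZ (g ∘ f) z = (fderiv ℝ (g ∘ f) z 1
      - Complex.I * fderiv ℝ (g ∘ f) z Complex.I) / 2 := rfl
  rw [e, h, h]
  unfold wirtZ wirtZBar
  simp only [map_div₀, map_add, map_mul, Complex.conj_I, map_ofNat]
  ring

/-- If the Beltrami coefficients of f⁻¹ and g agree, then g ∘ f is conformal. -/
theorem composition_conformal (Ω Ω' : Set ℂ) (f finv g : ℂ → ℂ)
    (hΩ : IsOpen Ω) (hΩ' : IsOpen Ω')
    (hbij : Set.BijOn f Ω Ω') (hinv : Set.InvOn finv f Ω Ω')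
    (hf : ∀ z ∈ Ω, DifferentiableAt ℝ f z)
    (hfi : ∀ w ∈ Ω', DifferentiableAt ℝ finv w)
    (hfz : ∀ z ∈ Ω, wirtZ f z ≠ 0)
    (hmu : ∀ z ∈ Ω, ‖beltrami f z‖ < 1)
    (hg : ∀ w ∈ Ω', DifferentiableAt ℝ g w)
    (hgz : ∀ w ∈ Ω', wirtZ g w ≠ 0)
    (hsame : ∀ w ∈ Ω', beltrami finv w = beltrami g w) :
    ∀ z ∈ Ω, wirtZBar (g ∘ f) z = 0 := by
  intro z hz
  have hw : f z ∈ Ω' := hbij.mapsTo hz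
  have hid : (finv ∘ f) =ᶠ[nhds z] id := by
    filter_upwards [hΩ.mem_nhds hz] with x hx
    exact hinv.1 hx
  have hfd := hid.fderiv_eq (𝕜 := ℝ)
  have e0 : wirtZBar (finv ∘ f) z = 0 := by
    unfold wirtZBar
    rw [hfd, fderiv_id]
    simp
  have e1 : wirtZ (finv ∘ f) z = 1 := by
    unfold wirtZ
    rw [hfd, fderiv_id]
    simp
  rw [wirtZBar_comp _ _ _ (hfi _ hw) (hf z hz)] at e0
  rw [wirtZ_comp _ _ _ (hfi _ hw) (hf z hz)] at e1
  rw [wirtZBar_comp _ _ _ (hg _ hw) (hf z hz)]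
  have ha : (starRingEnd ℂ) (wirtZ f z) ≠ 0 := by
    simpa using hfz z hz
  have hc := hgz _ hw
  have hp : wirtZ finv (f z) ≠ 0 := by
    intro hp
    rw [hp, zero_mul, zero_add] at e0 e1
    rcases mul_eq_zero.1 e0 with h | h
    · rw [h, zero_mul] at e1
      exact zero_ne_one e1
    · exact ha h
  have hs := hsame _ hw
  unfold beltrami at hs
  rw [div_eq_div_iff hp hc] at hs
  apply mul_left_cancel₀ hp
  linear_combination wirtZ g (f z) * e0 - (starRingEnd ℂ) (wirtZ f z) * hs
end

section
/- Let Ω ⊆ ℂ be a nonempty connected open set, let 𝔻 = {w ∈ ℂ : |w| < 1} be the open unit disk, and let f : Ω → 𝔻 be a continuously real-differentiable proper map such that for every z ∈ Ω, f_z(z) ≠ 0 and |μ_f(z)| < 1. Then f is a bijection from Ω onto 𝔻. -/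
theorem fderiv_injective_of_beltrami (f : ℂ → ℂ) (z : ℂ) (h0 : wirtZ f z ≠ 0)
    (h1 : ‖beltrami f z‖ < 1) : Function.Injective (fderiv ℝ f z) := by
  have key : ∀ v : ℂ, fderiv ℝ f z v
      = wirtZ f z * v + wirtZBar f z * (starRingEnd ℂ) v := by
    intro v
    have hv : v = v.re • (1 : ℂ) + v.im • Complex.I := by
      apply Complex.ext <;> simp
    have hc : (starRingEnd ℂ) v = v.re - v.im * Complex.I := by
      apply Complex.ext <;> simp
    have hv' : v = v.re + v.im * Complex.I := by
      apply Complex.ext <;> simp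
    have e : fderiv ℝ f z v = v.re * fderiv ℝ f z 1 + v.im * fderiv ℝ f z Complex.I := by
      conv_lhs => rw [hv]
      rw [map_add, map_smul, map_smul, Complex.real_smul, Complex.real_smul]
    rw [e, hc]
    unfold wirtZ wirtZBar
    generalize fderiv ℝ f z 1 = a
    generalize fderiv ℝ f z Complex.I = b
    conv_rhs => enter [1, 2]; rw [hv']
    linear_combination ((v.im : ℂ) * b) * Complex.I_sq
  rw [injective_iff_map_eq_zero]
  intro v hv
  by_contra hne
  rw [key] at hv
  have hlt : ‖wirtZBar f z‖ < ‖wirtZ f z‖ := by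
    unfold beltrami at h1
    rwa [norm_div, div_lt_one (norm_pos_iff.mpr h0)] at h1
  have h2 : ‖wirtZ f z * v‖ = ‖wirtZBar f z * (starRingEnd ℂ) v‖ := by
    rw [eq_neg_of_add_eq_zero_left hv, norm_neg]
  rw [norm_mul, norm_mul, RCLike.norm_conj] at h2
  have := mul_right_cancel₀ (norm_ne_zero_iff.mpr hne) h2
  linarith

/-- A proper, continuously differentiable map from a nonempty connected open set
into the unit disk with f_z ≠ 0 and |μ_f| < 1 everywhere is a bijection onto the disk. -/
theorem proper_qc_map_bijective (Ω : Set ℂ) (f : ℂ → ℂ)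
    (hΩo : IsOpen Ω) (hΩne : Ω.Nonempty) (hΩc : IsPreconnected Ω)
    (hC1 : ContDiffOn ℝ 1 f Ω)
    (hmaps : Set.MapsTo f Ω (Metric.ball (0 : ℂ) 1))
    (hproper : ∀ K : Set ℂ, K ⊆ Metric.ball (0 : ℂ) 1 → IsCompact K →
      IsCompact (Ω ∩ f ⁻¹' K))
    (hfz : ∀ z ∈ Ω, wirtZ f z ≠ 0) (hmu : ∀ z ∈ Ω, ‖beltrami f z‖ < 1) :
    Set.BijOn f Ω (Metric.ball (0 : ℂ) 1) := by
  have hloc : IsLocalHomeomorphOn f Ω := by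
    intro z hz
    have hinj := fderiv_injective_of_beltrami f z (hfz z hz) (hmu z hz)
    have hcd : ContDiffAt ℝ 1 f z := hC1.contDiffAt (hΩo.mem_nhds hz)
    let L : ℂ ≃L[ℝ] ℂ :=
      (LinearEquiv.ofInjectiveEndo (fderiv ℝ f z : ℂ →ₗ[ℝ] ℂ) hinj).toContinuousLinearEquiv
    have hL : (L : ℂ →L[ℝ] ℂ) = fderiv ℝ f z := by
      ext <;> rfl
    have hd : HasFDerivAt f (L : ℂ →L[ℝ] ℂ) z := by
      rw [hL]; exact (hcd.differentiableAt one_ne_zero).hasFDerivAt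
    exact ⟨hcd.toOpenPartialHomeomorph f hd one_ne_zero,
      hcd.mem_toOpenPartialHomeomorph_source hd one_ne_zero, rfl⟩
  let F : Ω → Metric.ball (0 : ℂ) 1 := hmaps.restrict f Ω (Metric.ball (0 : ℂ) 1)
  have hFc : Continuous F := hC1.continuousOn.mapsToRestrict hmaps
  have hFl : IsLocalHomeomorph F := by
    have h1 : IsLocalHomeomorph (Subtype.val : Metric.ball (0 : ℂ) 1 → ℂ) :=
      Metric.isOpen_ball.isOpenEmbedding_subtypeVal.isLocalHomeomorph
    have h2 : IsLocalHomeomorph (Subtype.val : Ω → ℂ) :=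
      hΩo.isOpenEmbedding_subtypeVal.isLocalHomeomorph
    refine IsLocalHomeomorph.of_comp (g := Subtype.val) ?_ h1 hFc
    rw [isLocalHomeomorph_iff_isLocalHomeomorphOn_univ]
    exact hloc.comp h2.isLocalHomeomorphOn (fun x _ => x.2)
  have : LocallyCompactSpace (Metric.ball (0 : ℂ) 1) :=
    Metric.isOpen_ball.locallyCompactSpace
  have hFp : IsProperMap F := by
    rw [isProperMap_iff_isCompact_preimage]
    refine ⟨hFc, fun K hK => ?_⟩
    have := hproper (Subtype.val '' K) (by rintro _ ⟨x, _, rfl⟩; exact x.2)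
      (hK.image continuous_subtype_val)
    rw [Topology.IsEmbedding.subtypeVal.isCompact_iff]
    convert this using 1
    ext z
    constructor
    · rintro ⟨x, hx, rfl⟩
      exact ⟨x.2, ⟨F x, hx, rfl⟩⟩
    · rintro ⟨hz, ⟨w, hw, hwz⟩⟩
      refine ⟨⟨z, hz⟩, ?_, rfl⟩
      have : F ⟨z, hz⟩ = w := Subtype.ext hwz.symm
      rw [Set.mem_preimage, this]; exact hw
  have hcov : IsCoveringMap F := by
    rw [isCoveringMap_iff_isCoveringMapOn_univ]
    refine hFp.isClosedMap.isCoveringMapOn_of_isLocalHomeomorphOn (fun x _ => ?_) ?_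
    · refine (hFp.isCompact_preimage isCompact_singleton).finite
        (IsDiscrete.of_openPartialHomeomorph F subset_rfl fun e _ => ?_)
      obtain ⟨φ, h1, h2⟩ := hFl e
      exact ⟨φ, h1, h2.symm⟩
    · exact hFl.isLocalHomeomorphOn
  have : ContractibleSpace (Metric.ball (0 : ℂ) 1) := Metric.contractibleSpace_ball one_pos
  have : LocallyPathConnectedSpace (Metric.ball (0 : ℂ) 1) :=
    Metric.isOpen_ball.locallyPathConnectedSpace
  have : PreconnectedSpace Ω := isPreconnected_iff_preconnectedSpace.mp hΩc
  have hsurj : Function.Surjective F := by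
    rw [← Set.range_eq_univ]
    refine IsClopen.eq_univ ⟨hFp.isClosedMap.isClosed_range, hFl.isOpenMap.isOpen_range⟩ ?_
    obtain ⟨z, hz⟩ := hΩne
    exact ⟨_, ⟨z, hz⟩, rfl⟩
  have hinj : Function.Injective F := by
    intro a b hab
    obtain ⟨s, ⟨hs1, hs2⟩, -⟩ := hcov.existsUnique_continuousMap_lifts
      (ContinuousMap.id (Metric.ball (0 : ℂ) 1)) (F a) a rfl
    have h : s ∘ F = id := hcov.eq_of_comp_eq (s.continuous.comp hFc) continuous_id
      (by rw [← Function.comp_assoc, hs2]; rfl) a hs1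
    have hb : s (F b) = b := congrFun h b
    rw [← hs1, hab, hb]
  refine ⟨hmaps, fun a ha b hb hab => ?_, fun w hw => ?_⟩
  · have := @hinj ⟨a, ha⟩ ⟨b, hb⟩ (Subtype.ext hab)
    exact congrArg Subtype.val this
  · obtain ⟨z, hz⟩ := hsurj ⟨w, hw⟩
    exact ⟨z, z.2, congrArg Subtype.val hz⟩
end

section
/- Let f : ℂ → ℂ be the ℝ-affine map f(z) = α·z + β·conj(z) + γ with α, β, γ ∈ ℂ and α ≠ 0 (so f_z ≡ α, f_zbar ≡ β and μ_f ≡ β/α). Let z₁ = a₁ + i·b₁, z₂ = a₂ + i·b₂, z₃ = a₃ + i·b₃ be three non-collinear points with images w₁ = f(z₁), w₂ = f(z₂), w₃ = f(z₃). Then, writing P = (b₃−b₂)·w₁ + (b₁−b₃)·w₂ + (b₂−b₁)·w₃ and Q = (a₃−a₂)·w₁ + (a₁−a₃)·w₂ + (a₂−a₁)·w₃, the denominator P + i·Q is nonzero and the constant Beltrami coefficient of f is given by μ_f = (P − i·Q)/(P + i·Q). -/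
/-- The Beltrami coefficient of an ℝ-affine map f(z) = αz + β·conj(z) + γ recovered from
the images of three non-collinear points. -/
theorem beltrami_from_three_points (α β γ : ℂ) (hα : α ≠ 0)
    (z₁ z₂ z₃ : ℂ)
    (hnc : ((z₂.re - z₁.re) * (z₃.im - z₁.im) -
        (z₃.re - z₁.re) * (z₂.im - z₁.im)) / 2 ≠ 0)
    (f : ℂ → ℂ) (hf : f = fun z => α * z + β * starRingEnd ℂ z + γ)
    (P Q : ℂ)
    (hP : P = ((z₃.im - z₂.im : ℝ) : ℂ) * f z₁ + ((z₁.im - z₃.im : ℝ) : ℂ) * f z₂ +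
        ((z₂.im - z₁.im : ℝ) : ℂ) * f z₃)
    (hQ : Q = ((z₃.re - z₂.re : ℝ) : ℂ) * f z₁ + ((z₁.re - z₃.re : ℝ) : ℂ) * f z₂ +
        ((z₂.re - z₁.re : ℝ) : ℂ) * f z₃) :
    P + Complex.I * Q ≠ 0 ∧ β / α = (P - Complex.I * Q) / (P + Complex.I * Q) := by
  obtain ⟨a₁, b₁⟩ := z₁
  obtain ⟨a₂, b₂⟩ := z₂
  obtain ⟨a₃, b₃⟩ := z₃
  simp only at hnc hP hQ
  set D : ℝ := (a₂ - a₁) * (b₃ - b₁) - (a₃ - a₁) * (b₂ - b₁) with hD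
  have hD0 : D ≠ 0 := fun h => hnc (by rw [h]; simp)
  have hDc : (D : ℂ) ≠ 0 := by exact_mod_cast hD0
  have hfv : ∀ x y : ℝ, f ⟨x, y⟩ = (α + β) * x + Complex.I * (α - β) * y + γ := by
    intro x y
    have h1 : (⟨x, y⟩ : ℂ) = x + y * Complex.I := Complex.mk_eq_add_mul_I x y
    rw [hf]
    simp only [h1, map_add, map_mul, Complex.conj_ofReal, Complex.conj_I]
    ring
  have hP' : P = -(D : ℂ) * (α + β) := by
    rw [hP, hfv, hfv, hfv, hD]
    push_cast
    ring
  have hQ' : Q = Complex.I * (D : ℂ) * (α - β) := by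
    rw [hQ, hfv, hfv, hfv, hD]
    push_cast
    ring
  have hIQ : Complex.I * Q = -(D : ℂ) * (α - β) := by
    rw [hQ']
    linear_combination (D : ℂ) * (α - β) * Complex.I_mul_I
  have h1 : P + Complex.I * Q = (-2 * (D : ℂ)) * α := by
    rw [hIQ, hP']; ring
  have h2 : P - Complex.I * Q = (-2 * (D : ℂ)) * β := by
    rw [hIQ, hP']; ring
  have hc : (-2 * (D : ℂ)) ≠ 0 := mul_ne_zero (by norm_num) hDc
  rw [h1, h2]
  exact ⟨mul_ne_zero hc hα, (mul_div_mul_left β α hc).symm⟩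
end

section
/- Let f = u + i·v : ℂ → ℂ be real-differentiable at a point z (with u, v the real and imaginary parts), and suppose f satisfies the Beltrami equation f_zbar(z) = μ·f_z(z) at z with μ = ρ + i·η ∈ ℂ and ρ² + η² < 1. Define the 2×2 matrix M = (1/(1−ρ²−η²))·[[(ρ−1)² + η², −2η], [−2η, (1+ρ)² + η²]]. Then at the point z, M·(u_x, u_y)ᵀ = (v_y, −v_x)ᵀ, where u_x, u_y, v_x, v_y denote the partial derivatives of u and v in the directions 1 and i. (Consequently, if f is C², the vector field M·∇u is divergence-free, i.e., ∇·(M·∇u) = 0.) -/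
/-- The Beltrami equation in terms of the elliptic matrix M: M·(u_x, u_y)ᵀ = (v_y, −v_x)ᵀ. -/
theorem beltrami_pde_matrix (f : ℂ → ℂ) (z : ℂ) (hf : DifferentiableAt ℝ f z)
    (ρ η : ℝ) (hμ : ρ ^ 2 + η ^ 2 < 1)
    (hbel : wirtZBar f z = ((ρ : ℂ) + (η : ℂ) * Complex.I) * wirtZ f z)
    (ux uy vx vy : ℝ)
    (hux : ux = (fderiv ℝ f z 1).re) (huy : uy = (fderiv ℝ f z Complex.I).re)
    (hvx : vx = (fderiv ℝ f z 1).im) (hvy : vy = (fderiv ℝ f z Complex.I).im) :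
    (((ρ - 1) ^ 2 + η ^ 2) * ux + (-2 * η) * uy) / (1 - ρ ^ 2 - η ^ 2) = vy ∧
    ((-2 * η) * ux + ((1 + ρ) ^ 2 + η ^ 2) * uy) / (1 - ρ ^ 2 - η ^ 2) = -vx := by
  have hD : 1 - ρ ^ 2 - η ^ 2 ≠ 0 := by
    intro h
    linarith
  have h2 : fderiv ℝ f z 1 + Complex.I * fderiv ℝ f z Complex.I =
      ((ρ : ℂ) + (η : ℂ) * Complex.I) *
        (fderiv ℝ f z 1 - Complex.I * fderiv ℝ f z Complex.I) := by
    unfold wirtZ wirtZBar at hbel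
    linear_combination 2 * hbel
  have E1 := congrArg Complex.re h2
  have E2 := congrArg Complex.im h2
  simp only [Complex.add_re, Complex.add_im, Complex.sub_re, Complex.sub_im, Complex.mul_re,
    Complex.mul_im, Complex.I_re, Complex.I_im, Complex.ofReal_re, Complex.ofReal_im,
    ← hux, ← huy, ← hvx, ← hvy] at E1 E2
  constructor
  · rw [div_eq_iff hD]
    linear_combination (1 - ρ) * E1 - η * E2
  · rw [div_eq_iff hD]
    linear_combination (-η) * E1 + (1 + ρ) * E2
end
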